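/- arXiv:2308.10833 — 2 statements merged into one kernel-verified Lean document; each statement's English description precedes it below -/
import Mathlib

section
/- For every integer k ≥ 3 and every integer q ≥ 2 there exists a constant C = C(k,q) > 0 such that the following holds: for every k-uniform hypergraph H with m ≥ 1 edges and no isolated vertices, the q-color Ramsey number satisfies r_k(H; q) ≤ tw_k(C·√m). -/
/-- The tower function: `tw 1 x = x` and `tw k x = 2 ^ tw (k-1) x` for `k ≥ 2`. -/
noncomputable def tw : ℕ → ℝ → ℝ
  | 0, x => x
  | 1, x => x
  | (k + 2), x => 2 ^ tw (k + 1) x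

/-- The `q`-color Ramsey number of a hypergraph given by its edge set `E` on a finite
vertex type `V`: the least `N` such that every `q`-coloring of the finite subsets of
`Fin N` admits an injection of `V` into `Fin N` under which all images of edges of `E`
receive the same color. -/
noncomputable def hypRamsey (q : ℕ) {V : Type} [Fintype V] [DecidableEq V]
    (E : Finset (Finset V)) : ℕ :=
  sInf {N : ℕ | ∀ χ : Finset (Fin N) → Fin q,
    ∃ f : V ↪ Fin N, ∃ c : Fin q, ∀ e ∈ E, χ (e.map f) = c}

open Finset Function

/-- The tower of `k` twos topped by the natural number `x`. -/
def natTower : ℕ → ℕ → ℕ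
  | 0, x => x
  | k + 1, x => 2 ^ natTower k x

theorem natTower_mono (k : ℕ) : Monotone (natTower k) := by
  induction k with
  | zero => exact fun _ _ h => h
  | succ k ih => exact fun _ _ h => Nat.pow_le_pow_right two_pos (ih h)

theorem natTower_pos (k : ℕ) {x : ℕ} (hx : 1 ≤ x) : 1 ≤ natTower k x := by
  cases k with
  | zero => exact hx
  | succ k => exact Nat.one_le_two_pow

theorem mul_natTower_le (k p : ℕ) {x : ℕ} (hx : 1 ≤ x) :
    p * natTower k x ≤ natTower k (p * x) := by
  induction k with
  | zero => exact le_rfl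
  | succ k ih =>
    rcases Nat.eq_zero_or_pos p with rfl | hp
    · simp
    obtain ⟨n, rfl⟩ : ∃ n, p = n + 1 := ⟨p - 1, by omega⟩
    have hpos := natTower_pos k hx
    calc (n + 1) * 2 ^ natTower k x
        ≤ 2 ^ n * 2 ^ natTower k x := Nat.mul_le_mul_right _ Nat.lt_two_pow_self
      _ = 2 ^ (n + natTower k x) := (pow_add _ _ _).symm
      _ ≤ 2 ^ ((n + 1) * natTower k x) := Nat.pow_le_pow_right two_pos (by nlinarith)
      _ ≤ natTower (k + 1) ((n + 1) * x) := Nat.pow_le_pow_right two_pos ih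

theorem natTower_succ_pow_le (k p : ℕ) {x : ℕ} (hx : 1 ≤ x) :
    natTower (k + 1) x ^ p ≤ natTower (k + 1) (p * x) := by
  rw [natTower, ← pow_mul, mul_comm]
  exact Nat.pow_le_pow_right two_pos (mul_natTower_le k p hx)

theorem natTower_add_le (k x y : ℕ) : natTower k x + y ≤ natTower k (x + y) := by
  induction k with
  | zero => exact le_rfl
  | succ k ih =>
    calc 2 ^ natTower k x + y ≤ 2 ^ natTower k x + 2 ^ natTower k x * (2 ^ y - 1) := by
          have h1 : y ≤ 2 ^ y - 1 := Nat.le_sub_one_of_lt Nat.lt_two_pow_self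
          have h2 : 1 ≤ 2 ^ natTower k x := Nat.one_le_two_pow
          nlinarith
      _ = 2 ^ (natTower k x + y) := by
          rw [pow_add]
          have h1 : 1 ≤ 2 ^ y := Nat.one_le_two_pow
          obtain ⟨n, hn⟩ : ∃ n, 2 ^ y = n + 1 := ⟨2 ^ y - 1, by omega⟩
          rw [hn]
          simp only [Nat.add_sub_cancel]
          ring
      _ ≤ 2 ^ natTower k (x + y) := Nat.pow_le_pow_right two_pos ih

theorem two_pow_mul_natTower_succ_le (k x y : ℕ) :
    2 ^ y * natTower (k + 1) x ≤ natTower (k + 1) (x + y) := by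
  rw [natTower, ← pow_add, add_comm]
  exact Nat.pow_le_pow_right two_pos (natTower_add_le k x y)

/-- Erdős–Rado: a large set contains `n` points such that the color of a `(k + 2)`-set with all
but its largest element among them does not depend on that largest element. -/
theorem exists_endHomogeneous {α : Type} [LinearOrder α] {k q t P : ℕ} (hq : 1 ≤ q)
    (hP : 2 * q ^ t ^ k ≤ P) (χ : Finset α → Fin q) {W : Finset α} (hW : P ^ t ≤ #W) :
    ∀ n ≤ t, ∃ A R : Finset α, A ⊆ W ∧ R ⊆ W ∧ #A = n ∧ P ^ (t - n) ≤ #R ∧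
      (∀ a ∈ A, ∀ c ∈ R, a < c) ∧
      ∀ S ⊆ A, #S = k + 1 → ∀ c ∈ A ∪ R, ∀ c' ∈ R, (∀ s ∈ S, s < c) →
        χ (insert c S) = χ (insert c' S) := by
  intro n
  induction n with
  | zero =>
    intro _
    refine ⟨∅, W, by simp, subset_rfl, by simp, by simpa using hW, by simp, ?_⟩
    intro S hS hc
    rw [subset_empty.mp hS] at hc
    simp at hc
  | succ n ih =>
    intro hn
    obtain ⟨A, R, hAW, hRW, hA, hR, hlt, hhom⟩ := ih (by omega)
    have : NeZero q := ⟨by omega⟩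
    have hqpos : 1 ≤ q ^ t ^ k := Nat.one_le_pow _ _ hq
    have hPpos : 1 ≤ P := by omega
    have hRne : R.Nonempty := card_pos.mp (lt_of_lt_of_le (Nat.pow_pos hPpos) hR)
    set a := R.min' hRne with ha
    have haR : a ∈ R := min'_mem _ _
    let F : α → (A.powersetCard k → Fin q) := fun c S => χ (insert c (insert a S.1))
    have hcard : #(univ : Finset (A.powersetCard k → Fin q)) * P ^ (t - (n + 1)) ≤
        #(R.erase a) := by
      have h1 : #(univ : Finset (A.powersetCard k → Fin q)) ≤ q ^ t ^ k := by
        rw [card_univ, Fintype.card_fun, Fintype.card_fin, Fintype.card_coe, card_powersetCard, hA]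
        exact Nat.pow_le_pow_right hq ((Nat.choose_le_pow n k).trans
          (Nat.pow_le_pow_left (by omega) k))
      rw [card_erase_of_mem haR]
      have h2 : P ^ (t - n) = P * P ^ (t - (n + 1)) := by
        rw [← pow_succ']
        congr 1
        omega
      have h3 : 1 ≤ P ^ (t - (n + 1)) := Nat.one_le_pow _ _ hPpos
      have h4 : q ^ t ^ k * P ^ (t - (n + 1)) + 1 ≤ P ^ (t - n) := by
        rw [h2]
        nlinarith [Nat.mul_le_mul_right (P ^ (t - (n + 1))) hP,
          Nat.mul_le_mul hqpos h3]
      have h5 := Nat.mul_le_mul_right (P ^ (t - (n + 1))) h1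
      omega
    obtain ⟨y, -, hy⟩ := exists_le_card_fiber_of_mul_le_card_of_maps_to
      (f := F) (fun _ _ => mem_univ _) univ_nonempty hcard
    have haA : a ∉ A := fun h => lt_irrefl _ (hlt a h a haR)
    refine ⟨insert a A, {c ∈ R.erase a | F c = y}, ?_, ?_, ?_, hy, ?_, ?_⟩
    · exact insert_subset (hRW haR) hAW
    · exact (filter_subset _ _).trans ((erase_subset _ _).trans hRW)
    · rw [card_insert_of_notMem haA, hA]
    · intro b hb c hc
      simp only [mem_filter, mem_erase] at hc
      rcases mem_insert.mp hb with rfl | hb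
      · exact lt_of_le_of_ne (min'_le _ _ hc.1.2) (Ne.symm hc.1.1)
      · exact hlt b hb c hc.1.2
    · intro S hS hSk c hc c' hc' hSc
      simp only [mem_union, mem_insert, mem_filter, mem_erase] at hc hc'
      by_cases haS : a ∈ S
      · have hac := hSc a haS
        have hc2 : c ∈ R ∧ F c = y := by
          rcases hc with (rfl | hc) | hc
          · exact absurd hac (lt_irrefl _)
          · exact absurd (hlt c hc a haR) (not_lt.mpr hac.le)
          · exact ⟨hc.1.2, hc.2⟩
        have hmem : S.erase a ∈ A.powersetCard k := by
          rw [mem_powersetCard, card_erase_of_mem haS, hSk]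
          refine ⟨fun x hx => ?_, rfl⟩
          exact (mem_insert.mp (hS (mem_of_mem_erase hx))).resolve_left (ne_of_mem_erase hx)
        have := congrFun (hc2.2.trans hc'.2.symm) ⟨_, hmem⟩
        simpa only [F, insert_erase haS] using this
      · refine hhom S (fun x hx => ?_) hSk c ?_ c' hc'.1.2 hSc
        · exact (mem_insert.mp (hS hx)).resolve_left (fun h => haS (h ▸ hx))
        · rw [mem_union]
          rcases hc with (rfl | hc) | hc
          · exact Or.inr haR
          · exact Or.inl hc
          · exact Or.inr hc.1.2

theorem exists_monochromatic_clique (k q : ℕ) (hq : 1 ≤ q) :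
    ∃ C : ℕ, 1 ≤ C ∧ ∀ r : ℕ, 1 ≤ r → ∀ (α : Type) [LinearOrder α] (W : Finset α),
      natTower k (C * r) ≤ #W → ∀ χ : Finset α → Fin q,
        ∃ A ⊆ W, #A = r ∧ ∃ c, ∀ e ⊆ A, #e = k + 1 → χ e = c := by
  have : NeZero q := ⟨by omega⟩
  induction k with
  | zero =>
    refine ⟨q, hq, fun r _ α _ W hW χ => ?_⟩
    obtain ⟨c, -, hc⟩ := exists_le_card_fiber_of_mul_le_card_of_maps_to
      (f := fun x => χ {x}) (s := W) (t := univ) (n := r) (fun _ _ => mem_univ _) univ_nonempty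
      (by simpa [natTower] using hW)
    obtain ⟨A, hA, hAr⟩ := exists_subset_card_eq hc
    refine ⟨A, hA.trans (filter_subset _ _), hAr, c, fun e he hek => ?_⟩
    obtain ⟨x, rfl⟩ := card_eq_one.mp hek
    exact (mem_filter.mp (hA (he (mem_singleton_self x)))).2
  | succ k ih =>
    obtain ⟨C, hC, hCr⟩ := ih
    refine ⟨(q + 1) * ((k + 1) * C), Nat.mul_pos (by omega) (Nat.mul_pos (by omega) hC),
      fun r hr α _ W hW χ => ?_⟩
    have hx : 1 ≤ C * r := Nat.mul_pos hC hr
    set t := natTower k (C * r) with ht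
    have ht1 : 1 ≤ t := natTower_pos k hx
    have hpow : t ^ (k + 1) ≤ natTower k ((k + 1) * (C * r)) := by
      cases k with
      | zero => simp [ht, natTower]
      | succ k => exact natTower_succ_pow_le k _ hx
    have hsize : (2 * q ^ t ^ k) ^ t ≤ #W := by
      refine le_trans ?_ hW
      calc (2 * q ^ t ^ k) ^ t ≤ (2 * (2 ^ q) ^ t ^ k) ^ t := by
            gcongr
            exact Nat.lt_two_pow_self.le
        _ = 2 ^ (t + q * t ^ (k + 1)) := by
            rw [← pow_mul, ← pow_succ', ← pow_mul]
            congr 1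
            ring
        _ ≤ 2 ^ natTower k ((q + 1) * ((k + 1) * C) * r) := by
            refine Nat.pow_le_pow_right two_pos ?_
            calc t + q * t ^ (k + 1) ≤ t ^ (k + 1) + q * t ^ (k + 1) :=
                  Nat.add_le_add_right (Nat.le_self_pow (by omega) t) _
              _ = (q + 1) * t ^ (k + 1) := by ring
              _ ≤ (q + 1) * natTower k ((k + 1) * (C * r)) := Nat.mul_le_mul_left _ hpow
              _ ≤ natTower k ((q + 1) * ((k + 1) * (C * r))) :=
                  mul_natTower_le _ _ (Nat.mul_pos (by omega) hx)
              _ = _ := by congr 1; ring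
    obtain ⟨A, R, hAW, -, hA, hR, hlt, hhom⟩ :=
      exists_endHomogeneous hq le_rfl χ hsize t le_rfl
    obtain ⟨c₀, hc₀⟩ : R.Nonempty := by
      rw [← card_pos]
      simpa using hR
    obtain ⟨B, hBA, hB, c, hc⟩ := hCr r hr α A hA.ge (fun S => χ (insert c₀ S))
    refine ⟨B, hBA.trans hAW, hB, c, fun e he hek => ?_⟩
    have hne : e.Nonempty := card_pos.mp (by omega)
    have hmem := e.max'_mem hne
    have hcard : #(e.erase (e.max' hne)) = k + 1 := by
      rw [card_erase_of_mem hmem, hek]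
      rfl
    rw [← hc _ ((erase_subset _ _).trans he) hcard, ← hhom (e.erase (e.max' hne))
      ((erase_subset _ _).trans (he.trans hBA)) hcard (e.max' hne)
      (mem_union_left _ (hBA (he hmem))) c₀ hc₀ (fun s hs => e.lt_max'_of_mem_erase_max' hne hs),
      insert_erase hmem]

theorem choose_le_pow_mul_choose {L Q b d : ℕ} (hb : 4 * Q * b ≤ L) (hd : L ≤ 2 * Q * d) :
    L.choose b ≤ (4 * Q) ^ b * d.choose b := by
  have h1 : L ≤ 4 * Q * (d + 1 - b) := by
    rcases le_total b d with h | h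
    · obtain ⟨x, rfl⟩ := Nat.exists_eq_add_of_le h
      have : b + x + 1 - b = x + 1 := by omega
      rw [this]
      nlinarith
    · have : L = 0 := by nlinarith
      omega
  refine Nat.le_of_mul_le_mul_left ?_ (Nat.factorial_pos b)
  calc b.factorial * L.choose b = L.descFactorial b :=
        (Nat.descFactorial_eq_factorial_mul_choose L b).symm
    _ ≤ L ^ b := Nat.descFactorial_le_pow L b
    _ ≤ (4 * Q * (d + 1 - b)) ^ b := Nat.pow_le_pow_left h1 b
    _ = (4 * Q) ^ b * (d + 1 - b) ^ b := mul_pow _ _ _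
    _ ≤ (4 * Q) ^ b * d.descFactorial b := Nat.mul_le_mul_left _ (Nat.pow_sub_le_descFactorial d b)
    _ = b.factorial * ((4 * Q) ^ b * d.choose b) := by
      rw [Nat.descFactorial_eq_factorial_mul_choose]
      ring

section Box

variable {ι X : Type} [Fintype ι] [DecidableEq ι] [Fintype X] [DecidableEq X]

theorem sum_card_update_mem (a : ι) (G : Finset (ι → X)) :
    ∑ z : ι → X, #{u | update z a u ∈ G} = Fintype.card X * #G := by
  have h1 : ∑ z : ι → X, #{u | update z a u ∈ G} =
      #{p : (ι → X) × X | update p.1 a p.2 ∈ G} := by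
    simp_rw [card_filter]
    rw [Fintype.sum_prod_type]
  have h2 : #{p : (ι → X) × X | update p.1 a p.2 ∈ G} = #(G ×ˢ (univ : Finset X)) := by
    refine card_nbij' (fun p => (update p.1 a p.2, p.1 a)) (fun p => (update p.1 a p.2, p.1 a))
      ?_ ?_ ?_ ?_
    · intro p hp
      simpa using hp
    · intro p hp
      simpa using hp
    · intro p _
      simp
    · intro p _
      simp
  rw [h1, h2, card_product, card_univ, mul_comm]

theorem exists_dense_fiber_subset (a : ι) {b Q : ℕ} (hb : 1 ≤ b) (hQ : 1 ≤ Q) (G : Finset (ι → X))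
    (hG : Fintype.card (ι → X) ≤ Q * #G) (hL : 4 * Q * b ≤ Fintype.card X) :
    ∃ B : Finset X, #B = b ∧
      Fintype.card (ι → X) ≤ 2 * Q * (4 * Q) ^ b * #{z : ι → X | ∀ u ∈ B, update z a u ∈ G} := by
  set L := Fintype.card X with hLdef
  set Z := Fintype.card (ι → X) with hZ
  let D : (ι → X) → Finset X := fun z => {u | update z a u ∈ G}
  let good : Finset (ι → X) := {z | L ≤ 2 * Q * #(D z)}
  have hLpos : 0 < L := lt_of_lt_of_le (by positivity) hL
  have hbL : b ≤ L := le_trans (by nlinarith) hL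
  have hgood : Z ≤ 2 * Q * #good := by
    have h1 : ∑ z, 2 * Q * #(D z) ≤ ∑ z, ((if z ∈ good then 2 * Q * L else 0) + L) := by
      refine sum_le_sum fun z _ => ?_
      split_ifs with h
      · exact le_add_right (Nat.mul_le_mul_left _ (card_le_univ _))
      · simp only [good, mem_filter, mem_univ, true_and, not_le] at h
        omega
    rw [← mul_sum, sum_card_update_mem, sum_add_distrib, sum_const, card_univ, ← hZ, ← sum_filter,
      sum_const, filter_mem_eq_inter, univ_inter, smul_eq_mul, smul_eq_mul] at h1
    have h2 : L * (2 * Z) ≤ L * (2 * Q * #good + Z) := by nlinarith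
    have h3 := Nat.le_of_mul_le_mul_left h2 hLpos
    omega
  have hcount : ∑ B ∈ powersetCard b (univ : Finset X), #{z : ι → X | ∀ u ∈ B, update z a u ∈ G} =
      ∑ z, (#(D z)).choose b := by
    simp_rw [card_filter]
    rw [sum_comm]
    refine sum_congr rfl fun z _ => ?_
    rw [← card_filter, ← card_powersetCard]
    congr 1
    ext B
    simp [D, mem_powersetCard, subset_iff, and_comm]
  have hsum : ∑ _B ∈ powersetCard b (univ : Finset X), Z ≤ ∑ B ∈ powersetCard b (univ : Finset X),
      2 * Q * (4 * Q) ^ b * #{z : ι → X | ∀ u ∈ B, update z a u ∈ G} := by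
    rw [← mul_sum, hcount, sum_const, card_powersetCard, card_univ, smul_eq_mul]
    calc L.choose b * Z ≤ L.choose b * (2 * Q * #good) := Nat.mul_le_mul_left _ hgood
      _ = 2 * Q * ∑ _z ∈ good, L.choose b := by rw [sum_const, smul_eq_mul]; ring
      _ ≤ 2 * Q * ∑ z ∈ good, (4 * Q) ^ b * (#(D z)).choose b := by
        refine Nat.mul_le_mul_left _ (sum_le_sum fun z hz => ?_)
        exact choose_le_pow_mul_choose hL (mem_filter.mp hz).2
      _ ≤ 2 * Q * ∑ z, (4 * Q) ^ b * (#(D z)).choose b :=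
        Nat.mul_le_mul_left _ (sum_le_sum_of_subset (subset_univ _))
      _ = _ := by rw [← mul_sum, ← mul_assoc]
  obtain ⟨B, hB, hBle⟩ := exists_le_of_sum_le (powersetCard_nonempty.mpr (by simpa using hbL)) hsum
  exact ⟨B, (mem_powersetCard.mp hB).2, hBle⟩

/-- A dense subset of a power of `X` contains a large family of boxes with prescribed side
lengths `b i` in the directions `i ∈ S`. -/
theorem exists_dense_boxes (S : Finset ι) {b : ι → ℕ} {K Q : ℕ} (hb : ∀ i, 1 ≤ b i)
    (hQ : 4 ≤ Q) (T : Finset (ι → X)) (hT : Fintype.card (ι → X) ≤ Q * #T)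
    (hbK : ∀ i ∈ S, 4 * b i ≤ K) (hL : Q ^ (∏ i ∈ S, 4 * b i) * K ≤ Fintype.card X) :
    ∃ B : ι → Finset X, (∀ i ∈ S, #(B i) = b i) ∧
      Fintype.card (ι → X) ≤ Q ^ (∏ i ∈ S, 4 * b i) *
        #{z : ι → X | ∀ x : ι → X, (∀ i ∈ S, x i ∈ B i) → (∀ i ∉ S, x i = z i) → x ∈ T} := by
  induction S using Finset.induction_on with
  | empty =>
    refine ⟨fun _ => ∅, by simp, hT.trans ?_⟩
    rw [prod_empty, pow_one]
    refine Nat.mul_le_mul_left _ (card_le_card fun z hz => ?_)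
    simp only [mem_filter, mem_univ, true_and]
    intro x _ hx
    rwa [show x = z from funext fun i => hx i (notMem_empty i)]
  | insert a S ha ih =>
    rw [prod_insert ha] at hL ⊢
    set p := ∏ i ∈ S, 4 * b i with hp
    have hp1 : 1 ≤ p := prod_pos fun i _ => Nat.mul_pos (by omega) (hb i)
    have hba := hb a
    have hple : p ≤ 4 * b a * p := Nat.le_mul_of_pos_left _ (by omega)
    have hQp : Q ^ p * K ≤ Fintype.card X :=
      le_trans (Nat.mul_le_mul_right _ (Nat.pow_le_pow_right (by omega) hple)) hL
    obtain ⟨B, hB, hBle⟩ := ih (fun i hi => hbK i (mem_insert_of_mem hi)) hQp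
    set G : Finset (ι → X) :=
      {z | ∀ x : ι → X, (∀ i ∈ S, x i ∈ B i) → (∀ i ∉ S, x i = z i) → x ∈ T} with hG
    have hbKa := hbK a (mem_insert_self a S)
    obtain ⟨Y, hY, hYle⟩ := exists_dense_fiber_subset a hba (Nat.one_le_pow p Q (by omega)) G hBle
      (by nlinarith [Nat.mul_le_mul_left (Q ^ p) hbKa])
    refine ⟨update B a Y, fun i hi => ?_, hYle.trans (Nat.mul_le_mul ?_ (card_le_card ?_))⟩
    · rcases mem_insert.mp hi with rfl | hi
      · simpa using hY
      · rw [update_of_ne (ne_of_mem_of_not_mem hi ha)]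
        exact hB i hi
    · have hQ4 : 4 ≤ Q ^ p := hQ.trans (Nat.le_self_pow (by omega) Q)
      calc 2 * Q ^ p * (4 * Q ^ p) ^ b a ≤ (4 * Q ^ p) * (4 * Q ^ p) ^ b a :=
            Nat.mul_le_mul_right _ (by omega)
        _ = (4 * Q ^ p) ^ (b a + 1) := (pow_succ' _ _).symm
        _ ≤ (Q ^ p * Q ^ p) ^ (b a + 1) :=
            Nat.pow_le_pow_left (Nat.mul_le_mul_right _ hQ4) _
        _ = Q ^ ((2 * b a + 2) * p) := by
            rw [← pow_add, ← pow_mul]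
            congr 1
            ring
        _ ≤ Q ^ (4 * b a * p) :=
            Nat.pow_le_pow_right (by omega) (Nat.mul_le_mul_right _ (by omega))
    · intro z hz
      simp only [mem_filter, mem_univ, true_and] at hz ⊢
      intro x hxB hxz
      have hxa : x a ∈ Y := by simpa using hxB a (mem_insert_self a S)
      have hmem := hz (x a) hxa
      simp only [hG, mem_filter, mem_univ, true_and] at hmem
      refine hmem x (fun i hi => ?_) (fun i hi => ?_)
      · have := hxB i (mem_insert_of_mem hi)
        rwa [update_of_ne (ne_of_mem_of_not_mem hi ha)] at this
      · rcases eq_or_ne i a with rfl | hia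
        · simp
        · rw [update_of_ne hia]
          exact hxz i (by simp [hia, hi])

end Box

/-- Greedy coloring with bounded color classes: vertices of level `i` use the colors below `J i`,
adjacent vertices of the same level get different colors, and every color is used at most
`cap i` times on level `i`. -/
theorem exists_bounded_coloring {V : Type} [Fintype V] [DecidableEq V] (adj : V → V → Prop)
    [DecidableRel adj] (hsymm : ∀ u v, adj u v → adj v u) (hirr : ∀ v, ¬ adj v v)
    (lvl : V → ℕ) (J cap : ℕ → ℕ) (hcap : ∀ i, 1 ≤ cap i)
    (h : ∀ v, (cap (lvl v) = 1 ∧ #{u | lvl u = lvl v} < J (lvl v)) ∨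
      #{u | adj u v} + #{u | lvl u = lvl v} / cap (lvl v) < J (lvl v))
    (U : Finset V) :
    ∃ c : V → ℕ, (∀ v ∈ U, c v < J (lvl v)) ∧
      (∀ u ∈ U, ∀ v ∈ U, adj u v → lvl u = lvl v → c u ≠ c v) ∧
      ∀ i j, #{v ∈ U | lvl v = i ∧ c v = j} ≤ cap i := by
  induction U using Finset.induction_on with
  | empty => exact ⟨fun _ => 0, by simp, by simp, by simp⟩
  | insert w U hw ih =>
    obtain ⟨c, hJ, hadj, hcount⟩ := ih
    obtain ⟨j, hjJ, hjadj, hjcap⟩ : ∃ j < J (lvl w),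
        (∀ u ∈ U, adj u w → lvl u = lvl w → c u ≠ j) ∧
        #{v ∈ U | lvl v = lvl w ∧ c v = j} < cap (lvl w) := by
      rcases h w with ⟨h1, h2⟩ | h2
      · have hlt : #(({u | lvl u = lvl w} : Finset V).image c) < #(range (J (lvl w))) :=
          lt_of_le_of_lt card_image_le (by simpa using h2)
        obtain ⟨j, hj, hj'⟩ := exists_mem_notMem_of_card_lt_card hlt
        simp only [mem_image, mem_filter, mem_univ, true_and, not_exists, not_and] at hj'
        refine ⟨j, mem_range.mp hj, fun u _ _ hu => hj' u hu, ?_⟩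
        rw [h1, Nat.lt_one_iff, card_eq_zero, filter_eq_empty_iff]
        exact fun v _ hv => hj' v hv.1 hv.2
      · let full : Finset ℕ :=
          {j ∈ range (J (lvl w)) | cap (lvl w) ≤ #{v ∈ U | lvl v = lvl w ∧ c v = j}}
        have hfull : #full ≤ #{u | lvl u = lvl w} / cap (lvl w) := by
          rw [Nat.le_div_iff_mul_le (hcap _)]
          calc #full * cap (lvl w) ≤ ∑ j ∈ full, #{v ∈ U | lvl v = lvl w ∧ c v = j} :=
                card_nsmul_le_sum _ _ _ fun j hj => (mem_filter.mp hj).2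
            _ = ∑ j ∈ full, #{v ∈ ({v ∈ U | lvl v = lvl w} : Finset V) | c v = j} := by
                simp_rw [filter_filter]
            _ = #{v ∈ ({v ∈ U | lvl v = lvl w} : Finset V) | c v ∈ full} :=
                sum_card_fiberwise_eq_card_filter _ _ _
            _ ≤ #{v ∈ U | lvl v = lvl w} := card_filter_le _ _
            _ ≤ #{u | lvl u = lvl w} := card_le_card (filter_subset_filter _ (subset_univ _))
        have hlt : #(({u | adj u w} : Finset V).image c ∪ full) < #(range (J (lvl w))) := by
          rw [card_range]
          exact lt_of_le_of_lt ((card_union_le _ _).trans (Nat.add_le_add card_image_le hfull)) h2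
        obtain ⟨j, hj, hj'⟩ := exists_mem_notMem_of_card_lt_card hlt
        simp only [mem_union, not_or, mem_image, mem_filter, mem_univ, true_and, not_exists,
          not_and, full, not_le] at hj'
        exact ⟨j, mem_range.mp hj, fun u _ hu _ => hj'.1 u hu, hj'.2 hj⟩
    have hne : ∀ v ∈ U, v ≠ w := fun v hv hvw => hw (hvw ▸ hv)
    refine ⟨update c w j, ?_, ?_, ?_⟩
    · intro v hv
      rcases mem_insert.mp hv with rfl | hv
      · simpa using hjJ
      · rw [update_of_ne (hne v hv)]
        exact hJ v hv
    · intro u hu v hv huv hl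
      rcases mem_insert.mp hu with rfl | hu' <;> rcases mem_insert.mp hv with rfl | hv'
      · exact absurd huv (hirr _)
      · rw [update_self, update_of_ne (hne v hv')]
        exact (hjadj v hv' (hsymm _ _ huv) hl.symm).symm
      · rw [update_self, update_of_ne (hne u hu')]
        exact hjadj u hu' huv hl
      · rw [update_of_ne (hne u hu'), update_of_ne (hne v hv')]
        exact hadj u hu' v hv' huv hl
    · intro i j'
      have hU : ({v ∈ U | lvl v = i ∧ update c w j v = j'} : Finset V) =
          {v ∈ U | lvl v = i ∧ c v = j'} :=
        filter_congr fun v hv => by rw [update_of_ne (hne v hv)]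
      rw [filter_insert, hU]
      split_ifs with hcond
      · obtain ⟨rfl, hj'⟩ := hcond
        rw [update_self] at hj'
        subst hj'
        exact (card_insert_le _ _).trans hjcap
      · exact hcount i j'

theorem sum_mul_div_two_pow_le (x n : ℕ) : ∑ i ∈ range n, i * (x / 2 ^ i) ≤ 2 * x := by
  have h : ∀ n : ℕ, ∑ i ∈ range n, (i : ℚ) / 2 ^ i = 2 - 2 * (n + 1) / 2 ^ n := by
    intro n
    induction n with
    | zero => norm_num
    | succ n ih =>
      rw [sum_range_succ, ih]
      push_cast
      field_simp
      ring
  have h2 : (∑ i ∈ range n, ((i * (x / 2 ^ i) : ℕ) : ℚ)) ≤ 2 * x := by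
    calc (∑ i ∈ range n, ((i * (x / 2 ^ i) : ℕ) : ℚ)) ≤ ∑ i ∈ range n, x * ((i : ℚ) / 2 ^ i) := by
          refine sum_le_sum fun i _ => ?_
          have h3 : ((x / 2 ^ i : ℕ) : ℚ) ≤ x / 2 ^ i := by
            simpa using (Nat.cast_div_le (m := x) (n := 2 ^ i) (α := ℚ))
          push_cast at h3 ⊢
          calc (i : ℚ) * ((x / 2 ^ i : ℕ) : ℚ) ≤ i * (x / 2 ^ i) := by gcongr
            _ = _ := by ring
      _ = x * (2 - 2 * (n + 1) / 2 ^ n) := by rw [← mul_sum, h]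
      _ ≤ x * 2 := by
          gcongr
          have : (0 : ℚ) ≤ 2 * (n + 1) / 2 ^ n := by positivity
          linarith
      _ = 2 * x := mul_comm _ _
  exact_mod_cast h2

theorem sum_card_edges_mem {V : Type} [Fintype V] [DecidableEq V] {E : Finset (Finset V)} {k : ℕ}
    (hE : ∀ e ∈ E, #e = k) : ∑ v, #{e ∈ E | v ∈ e} = k * #E := by
  simp_rw [card_filter]
  rw [sum_comm]
  simp_rw [← card_filter]
  rw [sum_congr rfl (g := fun _ => k) fun e he => by simpa using hE e he, sum_const, smul_eq_mul,
    mul_comm]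

/-- A `k`-uniform hypergraph with at most `s ^ 2` edges has a vertex coloring with `O(s)` colors
in which no edge repeats a color and the product of the sizes of the color classes is `2 ^ O(s)`. -/
theorem exists_rainbow_coloring {V : Type} [Fintype V] [DecidableEq V] {E : Finset (Finset V)}
    {k s : ℕ} (hk : 1 ≤ k) (hE : ∀ e ∈ E, #e = k) (hiso : ∀ v, ∃ e ∈ E, v ∈ e)
    (hs : 1 ≤ s) (hm : #E ≤ s ^ 2) :
    ∃ (σ : Type) (_ : Fintype σ) (_ : DecidableEq σ) (cap : σ → ℕ) (slot : V → σ),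
      Fintype.card σ ≤ 10 * k * s ∧ (∀ x, 1 ≤ cap x) ∧ ∏ x, 4 * cap x ≤ 2 ^ (40 * k * s) ∧
      (∀ e ∈ E, Set.InjOn slot e) ∧ ∀ x, #{v | slot v = x} ≤ cap x := by
  let d : V → ℕ := fun v => #{e ∈ E | v ∈ e}
  have hd : ∀ v, 1 ≤ d v := fun v => by
    obtain ⟨e, he, hv⟩ := hiso v
    exact card_pos.mpr ⟨e, mem_filter.mpr ⟨he, hv⟩⟩
  have hex : ∀ v, ∃ i, s ≤ 2 ^ i * d v := fun v =>
    ⟨s, Nat.lt_two_pow_self.le.trans (Nat.le_mul_of_pos_right _ (hd v))⟩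
  let lvl : V → ℕ := fun v => Nat.find (hex v)
  have hlvl : ∀ v, s ≤ 2 ^ lvl v * d v := fun v => Nat.find_spec (hex v)
  have hlvl_min : ∀ v i, lvl v = i + 1 → 2 ^ i * d v < s := fun v i hi =>
    not_le.mp (Nat.find_min (hex v) (show i < lvl v by omega))
  have hlvl_le : ∀ v, lvl v < s + 1 := fun v =>
    Nat.lt_succ_of_le (Nat.find_min' (hex v)
      (Nat.lt_two_pow_self.le.trans (Nat.le_mul_of_pos_right _ (hd v))))
  let J : ℕ → ℕ := fun i => 5 * k * s / 2 ^ i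
  have hn : ∀ i, #{u | lvl u = i} ≤ 2 ^ i * (k * s) := fun i => by
    have h1 : #{u | lvl u = i} * s ≤ ∑ u with lvl u = i, 2 ^ i * d u :=
      card_nsmul_le_sum _ _ _ fun u hu => by
        have := hlvl u
        rwa [(mem_filter.mp hu).2] at this
    have h2 : ∑ u with lvl u = i, 2 ^ i * d u ≤ 2 ^ i * (k * #E) := by
      rw [← sum_card_edges_mem hE, mul_sum]
      exact sum_le_sum_of_subset (subset_univ _)
    have h3 : 2 ^ i * (k * #E) ≤ 2 ^ i * (k * s ^ 2) := by gcongr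
    refine Nat.le_of_mul_le_mul_right ?_ hs
    calc _ ≤ 2 ^ i * (k * s ^ 2) := h1.trans (h2.trans h3)
      _ = _ := by ring
  let adj : V → V → Prop := fun u v => u ≠ v ∧ ∃ e ∈ E, u ∈ e ∧ v ∈ e
  have hdeg : ∀ v, #{u | adj u v} ≤ d v * (k - 1) := fun v => by
    calc #{u | adj u v} ≤ #(({e ∈ E | v ∈ e} : Finset (Finset V)).biUnion fun e => e.erase v) := by
          refine card_le_card fun u hu => ?_
          obtain ⟨huv, e, he, hue, hve⟩ := (mem_filter.mp hu).2
          exact mem_biUnion.mpr ⟨e, mem_filter.mpr ⟨he, hve⟩, mem_erase.mpr ⟨huv, hue⟩⟩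
      _ ≤ d v * (k - 1) := card_biUnion_le_card_mul _ _ _ fun e he => by
          obtain ⟨he, hve⟩ := mem_filter.mp he
          rw [card_erase_of_mem hve, hE e he]
  obtain ⟨c, hcJ, hcadj, hccap⟩ := exists_bounded_coloring adj
    (fun u v ⟨huv, e, he, hu, hv⟩ => ⟨huv.symm, e, he, hv, hu⟩) (fun v hv => hv.1 rfl) lvl J
    (fun i => 4 ^ i) (fun i => Nat.one_le_pow _ _ (by omega)) (fun v => by
      have hnv := hn (lvl v)
      have hdv := hdeg v
      have hks : 1 ≤ k * s := Nat.mul_pos hk hs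
      rcases hi : lvl v with _ | i
      · left
        rw [hi] at hnv
        simp only [pow_zero, one_mul, J, Nat.div_one, true_and] at hnv ⊢
        nlinarith
      · right
        have hmin := hlvl_min v i hi
        rw [hi] at hnv
        simp only [J]
        rw [Nat.lt_iff_add_one_le, Nat.le_div_iff_mul_le (by positivity)]
        have h1 : #{u | lvl u = i + 1} / 4 ^ (i + 1) * 2 ^ (i + 1) ≤ k * s := by
          have h4 : (4 : ℕ) ^ (i + 1) = 2 ^ (i + 1) * 2 ^ (i + 1) := by
            rw [← mul_pow]
            norm_num
          refine Nat.le_of_mul_le_mul_left ?_ (show 0 < 2 ^ (i + 1) by positivity)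
          calc 2 ^ (i + 1) * (#{u | lvl u = i + 1} / 4 ^ (i + 1) * 2 ^ (i + 1))
              = #{u | lvl u = i + 1} / 4 ^ (i + 1) * 4 ^ (i + 1) := by rw [h4]; ring
            _ ≤ #{u | lvl u = i + 1} := Nat.div_mul_le_self _ _
            _ ≤ _ := hnv
        have h2 : #{u | adj u v} * 2 ^ (i + 1) ≤ 2 * (k * s) := by
          calc #{u | adj u v} * 2 ^ (i + 1) ≤ d v * k * 2 ^ (i + 1) := by
                gcongr
                exact hdv.trans (Nat.mul_le_mul_left _ (Nat.sub_le _ _))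
            _ = 2 * k * (2 ^ i * d v) := by ring
            _ ≤ 2 * k * s := by gcongr
            _ = _ := by ring
        have h3 : 2 ^ (i + 1) ≤ 2 * (k * s) := by
          have : 2 ^ i ≤ 2 ^ i * d v := Nat.le_mul_of_pos_right _ (hd v)
          have : s ≤ k * s := Nat.le_mul_of_pos_left _ hk
          rw [pow_succ]
          omega
        nlinarith) univ
  refine ⟨Σ i : Fin (s + 1), Fin (J i), inferInstance, inferInstance, fun x => 4 ^ (x.1 : ℕ),
    fun v => ⟨⟨lvl v, hlvl_le v⟩, ⟨c v, hcJ v (mem_univ v)⟩⟩, ?_, ?_, ?_, ?_, ?_⟩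
  · rw [Fintype.card_sigma]
    simp only [Fintype.card_fin]
    rw [Fin.sum_univ_eq_sum_range J (s + 1)]
    refine (Nat.geom_sum_le le_rfl (5 * k * s) (s + 1)).trans ?_
    norm_num
    nlinarith
  · exact fun x => Nat.one_le_pow _ _ (by omega)
  · rw [Fintype.prod_sigma]
    simp only [prod_const, card_univ, Fintype.card_fin]
    rw [Fin.prod_univ_eq_prod_range (fun i => (4 * 4 ^ i) ^ J i) (s + 1)]
    have h1 : ∀ i, (4 * 4 ^ i) ^ J i = 2 ^ (2 * (J i + i * J i)) := fun i => by
      rw [← pow_succ', show (4 : ℕ) = 2 ^ 2 by norm_num, ← pow_mul, ← pow_mul]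
      congr 1
      ring
    simp_rw [h1]
    rw [prod_pow_eq_pow_sum, ← mul_sum, sum_add_distrib]
    refine Nat.pow_le_pow_right two_pos ?_
    have h2 := Nat.geom_sum_le le_rfl (5 * k * s) (s + 1)
    have h3 := sum_mul_div_two_pow_le (5 * k * s) (s + 1)
    simp only [J]
    norm_num at h2
    nlinarith
  · intro e he u hu v hv huv
    by_contra hne
    simp only [Sigma.mk.injEq, Fin.mk.injEq] at huv
    have hl := huv.1
    refine hcadj u (mem_univ u) v (mem_univ v) ⟨hne, e, he, hu, hv⟩ hl ?_
    have := huv.2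
    rw [Fin.heq_ext_iff (by rw [hl])] at this
    exact this
  · rintro ⟨i, j⟩
    refine (card_le_card fun v hv => ?_).trans (hccap i j)
    have hv' := (mem_filter.mp hv).2
    obtain ⟨rfl, hj⟩ := Sigma.mk.inj_iff.mp hv'
    rw [← eq_of_heq hj]
    simp

/-- If every coloring of the `k`-subsets of `Fin M` has a monochromatic clique indexed by `σ`, then
every coloring of the `k`-subsets of `Fin M × Fin L`, with `L` large, contains a monochromatic
blow-up of such a clique, hence every hypergraph that is a subgraph of the blow-up. -/
theorem exists_monochromatic_copy_of_clique {V σ : Type} [Fintype V] [DecidableEq V] [Fintype σ]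
    [DecidableEq σ] {E : Finset (Finset V)} {k q M L Q : ℕ} (hE : ∀ e ∈ E, #e = k)
    (cap : σ → ℕ) (slot : V → σ) (hcap : ∀ x, 1 ≤ cap x)
    (hinj : ∀ e ∈ E, Set.InjOn slot e) (hfiber : ∀ x, #{v | slot v = x} ≤ cap x)
    (hM : ∀ χ : Finset (Fin M) → Fin q, ∃ g : σ ↪ Fin M, ∃ c, ∀ e : Finset σ, #e = k →
      χ (e.map g) = c)
    (hQ : 4 ≤ Q) (hMQ : M ^ Fintype.card σ * q ≤ Q)
    (hL : Q ^ (∏ x, 4 * cap x) * ∏ x, 4 * cap x ≤ L) (χ : Finset (Fin M × Fin L) → Fin q) :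
    ∃ f : V ↪ Fin M × Fin L, ∃ c, ∀ e ∈ E, χ (e.map f) = c := by
  have hprod : 0 < ∏ x, 4 * cap x := prod_pos fun x _ => Nat.mul_pos (by omega) (hcap x)
  have hLpos : 0 < L := lt_of_lt_of_le (Nat.mul_pos (Nat.pow_pos (by omega)) hprod) hL
  have hZpos : 0 < Fintype.card (Fin M → Fin L) := by
    rw [Fintype.card_fun, Fintype.card_fin]
    exact Nat.pow_pos hLpos
  choose g c hgc using fun z : Fin M → Fin L => hM fun e => χ (e.image fun i => (i, z i))
  obtain ⟨⟨g₀, c₀⟩, hT⟩ : ∃ p : (σ ↪ Fin M) × Fin q,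
      Fintype.card (Fin M → Fin L) ≤ Q * #{z | (g z, c z) = p} := by
    by_contra! hlt
    have hcard : Fintype.card ((σ ↪ Fin M) × Fin q) ≤ Q := by
      rw [Fintype.card_prod, Fintype.card_embedding_eq, Fintype.card_fin, Fintype.card_fin]
      exact (Nat.mul_le_mul_right _ (Nat.descFactorial_le_pow _ _)).trans hMQ
    have hsum : ∑ p : (σ ↪ Fin M) × Fin q, #{z | (g z, c z) = p} =
        Fintype.card (Fin M → Fin L) := by
      rw [← card_univ, card_eq_sum_card_fiberwise (f := fun z => (g z, c z)) (t := univ)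
        (fun _ _ => by simp)]
    obtain ⟨z₀⟩ : Nonempty (Fin M → Fin L) := Fintype.card_pos_iff.mp hZpos
    have h1 : ∑ p : (σ ↪ Fin M) × Fin q, Q * #{z | (g z, c z) = p} <
        ∑ _p : (σ ↪ Fin M) × Fin q, Fintype.card (Fin M → Fin L) :=
      sum_lt_sum_of_nonempty ⟨(g z₀, c z₀), mem_univ _⟩ fun p _ => hlt p
    rw [← mul_sum, hsum, sum_const, card_univ, smul_eq_mul] at h1
    exact absurd (Nat.mul_le_mul_right _ hcard) (not_le.mpr h1)
  have hb : ∀ x, extend g₀ cap 1 (g₀ x) = cap x := fun x => g₀.injective.extend_apply _ _ x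
  have hbprod : ∏ i ∈ univ.map g₀, 4 * extend g₀ cap 1 i = ∏ x, 4 * cap x := by
    rw [prod_map]
    simp_rw [hb]
  obtain ⟨B, hB, hBle⟩ := exists_dense_boxes (univ.map g₀) (b := extend g₀ cap 1)
    (K := ∏ x, 4 * cap x) (fun i => by
      by_cases h : ∃ x, g₀ x = i
      · obtain ⟨x, rfl⟩ := h
        rw [hb]
        exact hcap x
      · rw [extend_apply' _ _ _ h]
        exact le_rfl) hQ _ hT (fun i hi => by
      obtain ⟨x, -, rfl⟩ := mem_map.mp hi
      rw [hb]
      exact single_le_prod' (f := fun x => 4 * cap x)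
        (fun y _ => Nat.mul_pos (by omega) (hcap y)) (mem_univ x))
      (by rwa [hbprod, Fintype.card_fin])
  obtain ⟨z, hz⟩ := card_pos.mp (Nat.pos_of_mul_pos_left (lt_of_lt_of_le hZpos hBle))
  simp only [mem_filter, mem_univ, true_and] at hz
  have hBcard : ∀ x, #(B (g₀ x)) = cap x := fun x => by
    rw [hB _ (mem_map_of_mem _ (mem_univ x)), hb]
  have hφ : ∀ x, ∃ φ : V → Fin L, (∀ v, slot v = x → φ v ∈ B (g₀ x)) ∧
      ∀ u v, slot u = x → slot v = x → φ u = φ v → u = v := fun x => by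
    obtain ⟨ψ⟩ : Nonempty (({v | slot v = x} : Finset V) ↪ B (g₀ x)) :=
      Function.Embedding.nonempty_of_card_le (by
        rw [Fintype.card_coe, Fintype.card_coe, hBcard]
        exact hfiber x)
    refine ⟨fun v => if h : slot v = x then ψ ⟨v, by simpa using h⟩ else ⟨0, hLpos⟩,
      fun v hv => ?_, fun u v hu hv huv => ?_⟩
    · simp only [hv, dite_true]
      exact (ψ _).2
    · simp only [hu, hv, dite_true] at huv
      simpa using ψ.injective (Subtype.ext huv)
  choose φ hφB hφinj using hφ
  refine ⟨⟨fun v => (g₀ (slot v), φ (slot v) v), fun u v huv => ?_⟩, c₀, fun e he => ?_⟩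
  · simp only [Prod.mk.injEq, EmbeddingLike.apply_eq_iff_eq] at huv
    exact hφinj (slot v) u v huv.1 rfl (by rw [← huv.2, huv.1])
  · have hw : ∀ x, ∃ u ∈ B (g₀ x), ∀ v ∈ e, slot v = x → u = φ x v := fun x => by
      by_cases h : ∃ v ∈ e, slot v = x
      · obtain ⟨v, hv, hvx⟩ := h
        refine ⟨φ x v, hφB x v hvx, fun v' hv' hvx' => ?_⟩
        rw [hinj e he hv hv' (hvx.trans hvx'.symm)]
      · obtain ⟨u, hu⟩ := card_pos.mp (lt_of_lt_of_le (hcap x) (hBcard x).ge)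
        exact ⟨u, hu, fun v hv hvx => absurd ⟨v, hv, hvx⟩ h⟩
    choose w hwB hwφ using hw
    have hmem := hz (extend g₀ w z) (fun i hi => by
      obtain ⟨x, -, rfl⟩ := mem_map.mp hi
      rw [g₀.injective.extend_apply]
      exact hwB x) (fun i hi => by
      rw [extend_apply']
      rintro ⟨x, rfl⟩
      exact hi (mem_map_of_mem _ (mem_univ x)))
    simp only [Prod.mk.injEq] at hmem
    have hcol := hgc (extend g₀ w z) (e.image slot) (by
      rw [card_image_of_injOn (hinj e he), hE e he])
    rw [hmem.1, hmem.2] at hcol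
    rw [← hcol, map_eq_image, map_eq_image, image_image, image_image]
    congr 1
    refine image_congr fun v hv => ?_
    simp only [comp_apply, g₀.injective.extend_apply, hwφ (slot v) v hv rfl]
    rfl

theorem tw_succ_natCast (k x : ℕ) : tw (k + 1) x = natTower k x := by
  induction k with
  | zero => rfl
  | succ k ih =>
    rw [tw, ih, natTower]
    push_cast
    exact Real.rpow_natCast 2 _

theorem tw_mono (k : ℕ) : Monotone (tw (k + 1)) := by
  induction k with
  | zero => exact fun _ _ h => h
  | succ k ih => exact fun _ _ h => Real.rpow_le_rpow_of_exponent_le one_le_two (ih h)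

theorem hypRamsey_le_mul {V : Type} [Fintype V] [DecidableEq V] {E : Finset (Finset V)}
    {q M L : ℕ} (h : ∀ χ : Finset (Fin M × Fin L) → Fin q,
      ∃ f : V ↪ Fin M × Fin L, ∃ c, ∀ e ∈ E, χ (e.map f) = c) :
    hypRamsey q E ≤ M * L := by
  refine Nat.sInf_le fun χ => ?_
  obtain ⟨f, c, hf⟩ := h fun e => χ (e.map finProdFinEquiv.toEmbedding)
  exact ⟨f.trans finProdFinEquiv.toEmbedding, c, fun e he => by
    rw [← hf e he, map_map]⟩

theorem exists_hypRamsey_le_natTower (k q : ℕ) (hq : 1 ≤ q) :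
    ∃ C : ℕ, 1 ≤ C ∧ ∀ (V : Type) [Fintype V] [DecidableEq V] (E : Finset (Finset V)) (s : ℕ),
      (∀ e ∈ E, #e = k + 3) → (∀ v, ∃ e ∈ E, v ∈ e) → 1 ≤ #E → 1 ≤ s → #E ≤ s ^ 2 →
        hypRamsey q E ≤ natTower (k + 2) (C * s) := by
  obtain ⟨C, hC, hclique⟩ := exists_monochromatic_clique (k + 2) q hq
  refine ⟨C * (10 * (k + 3)) + (q + 4 + 90 * (k + 3)), by omega,
    fun V _ _ E s hE hiso hE1 hs hm => ?_⟩
  obtain ⟨σ, _, _, cap, slot, hσ, hcap, hprod, hinj, hfiber⟩ :=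
    exists_rainbow_coloring (by omega) hE hiso hs hm
  obtain ⟨v₀⟩ : Nonempty V := by
    obtain ⟨e, he⟩ := card_pos.mp hE1
    obtain ⟨v, -⟩ := card_pos.mp (show 0 < #e by rw [hE e he]; omega)
    exact ⟨v⟩
  set r := Fintype.card σ with hr
  have hr1 : 1 ≤ r := Fintype.card_pos_iff.mpr ⟨slot v₀⟩
  set P := ∏ x, 4 * cap x with hP
  set a := natTower (k + 1) (C * (10 * (k + 3) * s)) with ha
  have ha1 : 1 ≤ a := natTower_pos _ (Nat.mul_pos hC (Nat.mul_pos (by omega) hs))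
  set D := (q + 2 + r) * a with hD
  have hMQ : (2 ^ a) ^ r * q ≤ 2 ^ D := by
    calc (2 ^ a) ^ r * q ≤ 2 ^ (a * r) * 2 ^ q := by
          rw [← pow_mul]
          exact Nat.mul_le_mul_left _ Nat.lt_two_pow_self.le
      _ = 2 ^ (a * r + q) := (pow_add _ _ _).symm
      _ ≤ 2 ^ D := Nat.pow_le_pow_right two_pos (by nlinarith)
  have hQ : 4 ≤ 2 ^ D := by
    calc 4 = 2 ^ 2 := by norm_num
      _ ≤ 2 ^ D := Nat.pow_le_pow_right two_pos (by nlinarith)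
  have hM : ∀ χ : Finset (Fin (2 ^ a)) → Fin q, ∃ g : σ ↪ Fin (2 ^ a), ∃ c, ∀ e : Finset σ,
      #e = k + 3 → χ (e.map g) = c := fun χ => by
    obtain ⟨A, -, hA, c, hc⟩ := hclique r hr1 (Fin (2 ^ a)) univ (by
      rw [card_univ, Fintype.card_fin]
      exact natTower_mono (k + 2) (Nat.mul_le_mul_left C hσ)) χ
    let g : σ ≃ A := Fintype.equivOfCardEq (by rw [Fintype.card_coe, hA])
    refine ⟨g.toEmbedding.trans (Embedding.subtype _), c, fun e he => hc _ (fun i hi => ?_) ?_⟩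
    · obtain ⟨x, -, rfl⟩ := mem_map.mp hi
      exact (g x).2
    · rw [card_map, he]
  refine (hypRamsey_le_mul (exists_monochromatic_copy_of_clique hE cap slot hcap hinj hfiber hM hQ
    hMQ le_rfl)).trans ?_
  rw [← hP]
  calc 2 ^ a * ((2 ^ D) ^ P * P) ≤ 2 ^ a * ((2 ^ D) ^ P * 2 ^ P) := by
        gcongr
        exact Nat.lt_two_pow_self.le
    _ = 2 ^ (a + D * P + P) := by rw [← pow_mul, ← pow_add, ← pow_add, add_assoc]
    _ ≤ 2 ^ (2 ^ ((q + 4 + 90 * (k + 3)) * s) * a) := by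
        refine Nat.pow_le_pow_right two_pos ?_
        have hP1 : 1 ≤ P := prod_pos fun x _ => Nat.mul_pos (by omega) (hcap x)
        calc a + D * P + P ≤ (q + 4 + r) * (P * a) := by
              have h1 := Nat.mul_le_mul hP1 (le_refl a)
              have h2 := Nat.mul_le_mul (le_refl P) ha1
              rw [hD]
              nlinarith
          _ ≤ 2 ^ (q + 4 + r) * (2 ^ (40 * (k + 3) * s) * a) := by
              gcongr
              exact Nat.lt_two_pow_self.le
          _ = 2 ^ (q + 4 + r + 40 * (k + 3) * s) * a := by rw [← mul_assoc, ← pow_add]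
          _ ≤ 2 ^ ((q + 4 + 90 * (k + 3)) * s) * a := by
              gcongr
              · exact one_le_two
              · nlinarith
    _ ≤ natTower (k + 2) ((C * (10 * (k + 3)) + (q + 4 + 90 * (k + 3))) * s) := by
        refine Nat.pow_le_pow_right two_pos ((two_pow_mul_natTower_succ_le _ _ _).trans_eq ?_)
        congr 1
        ring

/-- For every `k ≥ 3` and `q ≥ 2` there is `C > 0` such that every `k`-uniform
hypergraph with `m ≥ 1` edges and no isolated vertices has `q`-color Ramsey number at
most `tw k (C * √m)`. -/
theorem ramsey_upper_bound (k q : ℕ) (hk : 3 ≤ k) (hq : 2 ≤ q) :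
    ∃ C : ℝ, 0 < C ∧
      ∀ (V : Type) [Fintype V] [DecidableEq V] (E : Finset (Finset V)) (m : ℕ),
        (∀ e ∈ E, e.card = k) →
        (∀ v : V, ∃ e ∈ E, v ∈ e) →
        E.card = m → 1 ≤ m →
        (hypRamsey q E : ℝ) ≤ tw k (C * Real.sqrt m) := by
  obtain ⟨k, rfl⟩ : ∃ n, k = n + 3 := ⟨k - 3, by omega⟩
  obtain ⟨C, hC, h⟩ := exists_hypRamsey_le_natTower k q (by omega)
  refine ⟨2 * C, by positivity, fun V _ _ E m hE hiso hm hm1 => ?_⟩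
  have hle := h V E (Nat.sqrt m + 1) hE hiso (by omega) (by omega)
    (hm.le.trans (by rw [sq]; exact (Nat.lt_succ_sqrt m).le))
  calc (hypRamsey q E : ℝ) ≤ (natTower (k + 2) (C * (Nat.sqrt m + 1)) : ℕ) := by exact_mod_cast hle
    _ = tw (k + 3) ((C * (Nat.sqrt m + 1) : ℕ) : ℝ) := (tw_succ_natCast _ _).symm
    _ ≤ tw (k + 3) (2 * C * Real.sqrt m) := by
        refine tw_mono _ ?_
        have h1 : (Nat.sqrt m : ℝ) ≤ Real.sqrt m := Real.nat_sqrt_le_real_sqrt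
        have h2 : (1 : ℝ) ≤ Real.sqrt m := Real.one_le_sqrt.mpr (by exact_mod_cast hm1)
        push_cast
        calc (C : ℝ) * (Nat.sqrt m + 1) ≤ C * (2 * Real.sqrt m) := by
              gcongr
              linarith
          _ = 2 * C * Real.sqrt m := by ring
end

section
/- Let t ≥ 1 and let s_1, …, s_t be positive integers with P = s_1·s_2⋯s_t. Then for every n ≥ 1, every t-uniform hypergraph Γ on n vertices with at least P·n^{t − 1/P} edges contains a copy of K^{(t)}_{s_1,…,s_t}; that is, there exist pairwise disjoint vertex sets W_1, …, W_t ⊆ V(Γ) with |W_i| = s_i for each i, such that every transversal set {w_1, …, w_t} with w_i ∈ W_i for all i is an edge of Γ. -/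
open Finset
open scoped BigOperators

/-- Power mean inequality for uniform averages over a nonempty finite type. -/
theorem expect_pow_le_expect_pow {ι : Type*} [Fintype ι] [Nonempty ι] (f : ι → ℝ)
    (hf : ∀ i, 0 ≤ f i) (k : ℕ) : (𝔼 i, f i) ^ k ≤ 𝔼 i, f i ^ k := by
  have hc : (0 : ℝ) < Fintype.card ι := by exact_mod_cast Fintype.card_pos
  have h := Real.pow_arith_mean_le_arith_mean_pow univ (fun _ : ι => (Fintype.card ι : ℝ)⁻¹) f
    (fun _ _ => by positivity) (by simp [hc.ne']) (fun i _ => hf i) k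
  simpa [Fintype.expect_eq_sum_div_card, ← mul_sum, div_eq_inv_mul] using h

theorem expect_prod_eq_pow {V : Type*} [Fintype V] [Nonempty V] (f : V → ℝ) (k : ℕ) :
    𝔼 x : Fin k → V, ∏ j, f (x j) = (𝔼 v, f v) ^ k := by
  simp [Fintype.expect_eq_sum_div_card, div_pow, Fintype.sum_pow]

theorem expect_pi_succ {t : ℕ} {X : Fin (t + 1) → Type*} [∀ i, Fintype (X i)]
    (f : (∀ i, X i) → ℝ) :
    𝔼 x, f x = 𝔼 a : X 0, 𝔼 y : (∀ i : Fin t, X i.succ), f (Fin.cons a y) := by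
  rw [← Fintype.expect_equiv (Fin.consEquiv X) (fun p => f (Fin.cons p.1 p.2)) f (fun _ => rfl),
    ← univ_product_univ, expect_product]

theorem prod_pi_succ {t : ℕ} {X : Fin (t + 1) → Type*} [∀ i, Fintype (X i)]
    (f : (∀ i, X i) → ℝ) :
    ∏ x, f x = ∏ a : X 0, ∏ y : (∀ i : Fin t, X i.succ), f (Fin.cons a y) := by
  rw [← Fintype.prod_equiv (Fin.consEquiv X) (fun p => f (Fin.cons p.1 p.2)) f (fun _ => rfl),
    Fintype.prod_prod_type]

/-- A complete `t`-partite pattern with parts of sizes `s i` has homomorphism density at least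
the edge density to the power `∏ i, s i`. -/
theorem expect_pow_le_expect_complete_partite {V : Type*} [Fintype V] [Nonempty V] {t : ℕ}
    (s : Fin t → ℕ) (f : (Fin t → V) → ℝ) (hf : ∀ w, 0 ≤ f w) :
    (𝔼 w, f w) ^ (∏ i, s i) ≤
      𝔼 x : (∀ i, Fin (s i) → V), ∏ φ : (∀ i, Fin (s i)), f (fun i => x i (φ i)) := by
  induction t with
  | zero => simp [Subsingleton.elim _ (default : Fin 0 → V)]
  | succ t ih =>
    let g : (Fin (s 0) → V) → (Fin t → V) → ℝ := fun a y => ∏ j, f (Fin.cons (a j) y)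
    have hg : ∀ a y, 0 ≤ g a y := fun a y => prod_nonneg fun j _ => hf _
    have hcons : ∀ (a : Fin (s 0) → V) (y : ∀ i : Fin t, Fin (s i.succ) → V) (j : Fin (s 0))
        (ψ : ∀ i : Fin t, Fin (s i.succ)),
        (fun i => (Fin.cons a y : ∀ i, Fin (s i) → V) i ((Fin.cons j ψ : ∀ i, Fin (s i)) i)) =
          (Fin.cons (a j) (fun i => y i (ψ i)) : Fin (t + 1) → V) := by
      intro a y j ψ
      funext i
      refine Fin.cases ?_ (fun i => ?_) i <;> simp
    calc (𝔼 w, f w) ^ (∏ i, s i)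
        = ((𝔼 y : Fin t → V, 𝔼 v : V, f (Fin.cons v y)) ^ s 0) ^ ∏ i : Fin t, s i.succ := by
          rw [expect_pi_succ, expect_comm, Fin.prod_univ_succ, pow_mul]
      _ ≤ (𝔼 y : Fin t → V, (𝔼 v : V, f (Fin.cons v y)) ^ s 0) ^ ∏ i : Fin t, s i.succ := by
          gcongr
          · exact pow_nonneg (expect_nonneg fun _ _ => expect_nonneg fun _ _ => hf _) _
          · exact expect_pow_le_expect_pow _ (fun _ => expect_nonneg fun _ _ => hf _) _
      _ = (𝔼 a, 𝔼 y, g a y) ^ ∏ i : Fin t, s i.succ := by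
          rw [expect_comm]
          congr 1
          exact expect_congr rfl fun y _ =>
            (expect_prod_eq_pow (fun v => f (Fin.cons v y)) (s 0)).symm
      _ ≤ 𝔼 a, (𝔼 y, g a y) ^ ∏ i : Fin t, s i.succ :=
          expect_pow_le_expect_pow _ (fun a => expect_nonneg fun y _ => hg a y) _
      _ ≤ 𝔼 a, 𝔼 y : (∀ i : Fin t, Fin (s i.succ) → V),
            ∏ ψ : (∀ i : Fin t, Fin (s i.succ)), g a (fun i => y i (ψ i)) :=
          expect_le_expect fun a _ => ih _ _ (hg a)
      _ = _ := by
          rw [expect_pi_succ]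
          refine expect_congr rfl fun a _ => expect_congr rfl fun y _ => ?_
          rw [prod_pi_succ, prod_comm]
          simp only [hcons]

/-- Fixing a coincidence between two coordinates costs a factor `Fintype.card V`. -/
theorem card_coincidence_mul_card_le {V ι : Type*} [Fintype V] [DecidableEq V] [Fintype ι]
    [DecidableEq ι] (s : ι → ℕ) (i : ι) {j k : Fin (s i)} (hjk : j ≠ k) :
    #{x : (∀ i, Fin (s i) → V) | x i j = x i k} * Fintype.card V ≤
      Fintype.card (∀ i, Fin (s i) → V) := by
  rw [← card_univ (α := V), ← card_product, ← card_univ]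
  refine card_le_card_of_injOn
    (fun p => Function.update p.1 i (Function.update (p.1 i) j p.2)) (by simp) ?_
  rintro ⟨x, v⟩ hx ⟨y, u⟩ hy h
  simp only [coe_product, Set.mem_prod, mem_coe, mem_filter, mem_univ, true_and, and_true] at hx hy
  have hi : Function.update (x i) j v = Function.update (y i) j u := by
    simpa using congrFun h i
  have hk : x i k = y i k := by simpa [hjk.symm] using congrFun hi k
  refine Prod.ext (funext fun a => ?_) (by simpa using congrFun hi j)
  by_cases ha : a = i
  · subst ha
    funext b
    by_cases hb : b = j
    · subst hb; exact hx.trans (hk.trans hy.symm)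
    · simpa [hb] using congrFun hi b
  · simpa [ha] using congrFun h a

theorem sum_mul_pred_le_prod_mul_pred {ι : Type*} (A : Finset ι) (s : ι → ℕ)
    (hs : ∀ i, 1 ≤ s i) :
    ∑ i ∈ A, s i * (s i - 1) ≤ (∏ i ∈ A, s i) * (∏ i ∈ A, s i - 1) := by
  classical
  induction A using Finset.induction_on with
  | empty => simp
  | insert a A ha ih =>
    rw [sum_insert ha, prod_insert ha]
    have hQ : 1 ≤ ∏ i ∈ A, s i := Finset.one_le_prod' fun i _ => hs i
    refine (Nat.add_le_add_left ih _).trans ?_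
    obtain ⟨x, hx⟩ := Nat.exists_eq_add_of_le (hs a)
    obtain ⟨y, hy⟩ := Nat.exists_eq_add_of_le hQ
    rw [hx, hy]
    have : (1 + x) * (1 + y) - 1 = x + y + x * y := by
      rw [Nat.sub_eq_iff_eq_add (by nlinarith)]; ring
    rw [this, Nat.add_sub_cancel_left, Nat.add_sub_cancel_left]
    nlinarith [Nat.zero_le (x * y), Nat.zero_le (x * y * x), Nat.zero_le (x * y * y),
      Nat.zero_le (x * y * (x * y))]

theorem mul_pred_lt_pow_self {P : ℕ} (hP : 1 ≤ P) : P * (P - 1) < P ^ P := by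
  obtain rfl | h2 := hP.eq_or_lt
  · simp
  · calc P * (P - 1) < P * P := by gcongr; omega
      _ = P ^ 2 := by ring
      _ ≤ P ^ P := Nat.pow_le_pow_right hP h2

/-- If more than a `P * (P - 1) / card V` fraction of the tuples lie in `G`, where `P = ∏ i, s i`,
then some member of `G` has no coincidence inside a block. -/
theorem exists_injective_of_lt_card {V ι : Type*} [Fintype V] [Fintype ι]
    [DecidableEq ι] (s : ι → ℕ) (hs : ∀ i, 1 ≤ s i) (G : Finset (∀ i, Fin (s i) → V))
    (hG : (∏ i, s i) * (∏ i, s i - 1) * Fintype.card (∀ i, Fin (s i) → V) <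
      #G * Fintype.card V) :
    ∃ x ∈ G, ∀ i, Function.Injective (x i) := by
  classical
  by_contra! hbad
  have hsub : G ⊆ univ.biUnion fun i => (univ : Finset (Fin (s i))).offDiag.biUnion fun p =>
      {x : (∀ i, Fin (s i) → V) | x i p.1 = x i p.2} := by
    intro x hx
    obtain ⟨i, hi⟩ := hbad x hx
    obtain ⟨j, k, hjk, hne⟩ := Function.not_injective_iff.mp hi
    simp only [mem_biUnion, mem_univ, true_and, mem_offDiag, mem_filter]
    exact ⟨i, (j, k), hne, hjk⟩
  refine hG.not_ge ?_
  calc #G * Fintype.card V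
      ≤ (∑ i, ∑ p ∈ (univ : Finset (Fin (s i))).offDiag,
          #{x : (∀ i, Fin (s i) → V) | x i p.1 = x i p.2}) * Fintype.card V := by
        gcongr
        exact (card_le_card hsub).trans
          (card_biUnion_le.trans (sum_le_sum fun i _ => card_biUnion_le))
    _ ≤ ∑ i, ∑ p ∈ (univ : Finset (Fin (s i))).offDiag,
          Fintype.card (∀ i, Fin (s i) → V) := by
        rw [sum_mul]
        refine sum_le_sum fun i _ => ?_
        rw [sum_mul]
        refine sum_le_sum fun p hp => ?_
        exact card_coincidence_mul_card_le s i (mem_offDiag.mp hp).2.2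
    _ = (∑ i, s i * (s i - 1)) * Fintype.card (∀ i, Fin (s i) → V) := by
        simp only [sum_const, offDiag_card, card_univ, Fintype.card_fin, smul_eq_mul, sum_mul,
          Nat.mul_sub_one]
    _ ≤ _ := by
        gcongr
        exact sum_mul_pred_le_prod_mul_pred _ s hs

/-- Every family of `t`-sets is covered by the images of `t`-tuples. -/
theorem card_le_card_image_mem {V : Type*} [Fintype V] [DecidableEq V] {t : ℕ}
    (E : Finset (Finset V)) (hE : ∀ e ∈ E, #e = t) :
    #E ≤ #{w : Fin t → V | univ.image w ∈ E} := by
  refine card_le_card_of_surjOn (fun w => univ.image w) fun e he => ?_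
  have hr : univ.image (fun i => (e.equivFinOfCardEq (hE e he)).symm i : Fin t → V) = e := by
    ext v
    simp only [mem_image, mem_univ, true_and]
    exact ⟨fun ⟨i, hi⟩ => hi ▸ Subtype.coe_prop _,
      fun hv => ⟨e.equivFinOfCardEq (hE e he) ⟨v, hv⟩, by simp⟩⟩
  exact ⟨_, by simpa [hr] using he, hr⟩

/-- Kővári–Sós–Turán for `t`-uniform hypergraphs: if `s 1, …, s t` are positive with
product `P`, then every `t`-uniform hypergraph on `n ≥ 1` vertices with at least
`P * n ^ (t - 1/P)` edges contains a complete `t`-partite subhypergraph with parts of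
sizes `s 1, …, s t`. -/
theorem hypergraph_KST (t : ℕ) (ht : 1 ≤ t) (s : Fin t → ℕ) (hs : ∀ i, 1 ≤ s i)
    (P : ℕ) (hP : P = ∏ i, s i)
    (V : Type) [Fintype V] [DecidableEq V] (n : ℕ) (hn : 1 ≤ n)
    (hV : Fintype.card V = n)
    (E : Finset (Finset V)) (hE : ∀ e ∈ E, e.card = t)
    (hcard : (P : ℝ) * (n : ℝ) ^ ((t : ℝ) - 1 / (P : ℝ)) ≤ (E.card : ℝ)) :
    ∃ W : Fin t → Finset V,
      (∀ i j, i ≠ j → Disjoint (W i) (W j)) ∧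
      (∀ i, (W i).card = s i) ∧
      (∀ w : Fin t → V, (∀ i, w i ∈ W i) → Finset.image w Finset.univ ∈ E) := by
  have hP1 : 1 ≤ P := hP ▸ Finset.one_le_prod' fun i _ => hs i
  have hn0 : (0 : ℝ) < n := by exact_mod_cast hn
  have : Nonempty V := Fintype.card_pos_iff.mp (by omega)
  let G : Finset (∀ i, Fin (s i) → V) :=
    {x | ∀ φ : (∀ i, Fin (s i)), univ.image (fun i => x i (φ i)) ∈ E}
  let f : (Fin t → V) → ℝ := fun w => if univ.image w ∈ E then 1 else 0
  have hdensity : (P : ℝ) * (n : ℝ) ^ (-(1 / (P : ℝ))) ≤ 𝔼 w, f w := by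
    have hEf : (𝔼 w, f w) = (#{w : Fin t → V | univ.image w ∈ E} : ℝ) / (n : ℝ) ^ t := by
      simp [f, Fintype.expect_eq_sum_div_card, hV]
    rw [hEf, le_div_iff₀ (by positivity), mul_assoc, ← Real.rpow_natCast, ← Real.rpow_add hn0,
      neg_add_eq_sub]
    exact hcard.trans (by exact_mod_cast card_le_card_image_mem E hE)
  have hpow : ((P : ℝ) * (n : ℝ) ^ (-(1 / (P : ℝ)))) ^ P = (P : ℝ) ^ P / n := by
    have : (-(1 / (P : ℝ))) * P = -1 := by
      have : (P : ℝ) ≠ 0 := by positivity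
      field_simp
    rw [mul_pow, ← Real.rpow_mul_natCast hn0.le, this, Real.rpow_neg_one, div_eq_mul_inv]
  have hhom : (𝔼 x : (∀ i, Fin (s i) → V), ∏ φ : (∀ i, Fin (s i)), f (fun i => x i (φ i))) =
      (#G : ℝ) / Fintype.card (∀ i, Fin (s i) → V) := by
    simp only [f, G, Fintype.expect_eq_sum_div_card, prod_ite_zero, prod_const_one, sum_boole,
      mem_univ, true_imp_iff]
  have hN : 0 < Fintype.card (∀ i, Fin (s i) → V) := Fintype.card_pos
  have hmany : P ^ P * Fintype.card (∀ i, Fin (s i) → V) ≤ #G * n := by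
    have h := (pow_le_pow_left₀ (by positivity) hdensity P).trans_eq (by rw [hP]) |>.trans
      (expect_pow_le_expect_complete_partite s f fun w => by positivity)
    rw [hpow, hhom, div_le_div_iff₀ hn0 (by exact_mod_cast hN)] at h
    exact_mod_cast h
  obtain ⟨x, hxG, hinj⟩ := exists_injective_of_lt_card s hs G (by
    rw [hV, ← hP]
    exact (Nat.mul_lt_mul_of_pos_right (mul_pred_lt_pow_self hP1) hN).trans_le hmany)
  have hx : ∀ w : Fin t → V, (∀ i, w i ∈ univ.image (x i)) → univ.image w ∈ E := by
    intro w hw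
    choose φ _ hφ using fun i => mem_image.mp (hw i)
    simpa [hφ] using (mem_filter.mp hxG).2 φ
  refine ⟨fun i => univ.image (x i), fun i j hij => ?_, fun i => ?_, hx⟩
  · rw [disjoint_left]
    intro v hvi hvj
    let w : Fin t → V := fun k => if k = i ∨ k = j then v else x k ⟨0, hs k⟩
    have hw : univ.image w ∈ E := hx w fun k => by
      by_cases hk : k = i ∨ k = j
      · simp only [w, hk, if_true]
        rcases hk with rfl | rfl <;> assumption
      · simp only [w, hk, if_false]
        exact mem_image_of_mem _ (mem_univ _)
    have hwinj : Function.Injective w := by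
      have hc : #(univ.image w) = #(univ : Finset (Fin t)) := by simp [hE _ hw]
      simpa using card_image_iff.mp hc
    exact hij (hwinj (by simp [w]))
  · rw [card_image_of_injective _ (hinj i), card_univ, Fintype.card_fin]
end
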